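/- (The solution operator maps bounded sets to bounded sets) Suppose |𝒢(x)| ≤ κ·‖x‖ for all x ∈ C([a,b],ℝ) with κ ∈ (0,1), f(·,u) is measurable for each u, |f(t,x)| ≤ κ₁(t)·Ψ(|x|) for all t ∈ (a,b) and x ∈ ℝ with κ₁ measurable, ψ'·κ₁ ∈ L¹(a,b), and Ψ: [0,∞) → [0,∞) nondecreasing. Then for every r > 0 and every continuous x: [a,b] → ℝ with ‖x‖ ≤ r such that t ↦ f(t,x(t)) is measurable, the function Sx is well defined and ‖Sx‖ ≤ κ·r + Ψ(r)·G_max·∫_a^b ψ'(τ)κ₁(τ) dτ, where G_max = L^{α+β−1}/Γ(α+β). -/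

import Mathlib

open MeasureTheory Set

/-- The Green function of the sequential fractional boundary value problem. -/
noncomputable def G (a b α β : ℝ) (ψ : ℝ → ℝ) (τ t : ℝ) : ℝ :=
  if τ ≤ t then
    (ψ t - ψ a) ^ β * (ψ b - ψ τ) ^ (α + β - 1) /
        (Real.Gamma (α + β) * (ψ b - ψ a) ^ β) -
      (ψ t - ψ τ) ^ (α + β - 1) / Real.Gamma (α + β)
  else
    (ψ t - ψ a) ^ β * (ψ b - ψ τ) ^ (α + β - 1) /
      (Real.Gamma (α + β) * (ψ b - ψ a) ^ β)

/-- The supremum norm of a function over the interval `[a,b]`. -/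
noncomputable def supNorm (a b : ℝ) (x : ℝ → ℝ) : ℝ :=
  ⨆ t : Set.Icc a b, |x ↑t|

/-- The solution operator `S` of the boundary value problem. -/
noncomputable def Sop (a b α β : ℝ) (ψ ψd : ℝ → ℝ) (f : ℝ → ℝ → ℝ)
    (𝒢 : (ℝ → ℝ) → ℝ) (x : ℝ → ℝ) (t : ℝ) : ℝ :=
  ((ψ t - ψ a) / (ψ b - ψ a)) ^ β * 𝒢 x +
    ∫ τ in a..b, G a b α β ψ τ t * ψd τ * f τ (x τ)

/-! Writing `K u = u ^ (α + β - 1) / Γ(α + β)` and `θ t = ((ψ t - ψ a) / (ψ b - ψ a)) ^ β`, the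
Green function is `θ t * K (ψ b - ψ τ)` minus, for `τ ≤ t`, the Volterra term `K (ψ t - ψ τ)`. Both
terms lie in `[0, K (ψ b - ψ a)]`, hence so does the absolute value of their difference, and
integration against `G` is bounded by `K (ψ b - ψ a)` from `L¹` to the supremum norm. Since
`|x| ≤ r`, the growth condition dominates `ψ' * f(·, x(·))` in `L¹` by `Ψ r * (ψ' * κ₁)`. -/

/-- The kernel `u ^ (p - 1) / Γ(p)` of the Riemann–Liouville fractional integral of order `p`. The
Green function `G` is built from it with `p = α + β`. -/
noncomputable def fractionalKernel (p u : ℝ) : ℝ :=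
  u ^ (p - 1) / Real.Gamma p

section FractionalKernel

variable {p u v : ℝ}

lemma measurable_fractionalKernel (p : ℝ) : Measurable (fractionalKernel p) := by
  unfold fractionalKernel
  fun_prop

lemma fractionalKernel_mem_Icc (hp : 1 ≤ p) (hu : 0 ≤ u) (huv : u ≤ v) :
    fractionalKernel p u ∈ Icc 0 (fractionalKernel p v) := by
  have hΓ : 0 ≤ Real.Gamma p := Real.Gamma_nonneg_of_nonneg (by linarith)
  exact ⟨div_nonneg (Real.rpow_nonneg hu _) hΓ,
    div_le_div_of_nonneg_right (Real.rpow_le_rpow hu huv (by linarith)) hΓ⟩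

end FractionalKernel

section SupNorm

variable {a b C t : ℝ} {x : ℝ → ℝ}

lemma abs_le_supNorm (hx : ContinuousOn x (Icc a b)) (ht : t ∈ Icc a b) :
    |x t| ≤ supNorm a b x := by
  have hbdd : BddAbove (range fun s : Icc a b => |x s|) := by
    simpa only [image_eq_range] using isCompact_Icc.bddAbove_image hx.abs
  exact le_ciSup hbdd ⟨t, ht⟩

lemma supNorm_le (hab : a ≤ b) (hC : ∀ t ∈ Icc a b, |x t| ≤ C) : supNorm a b x ≤ C :=
  have : Nonempty (Icc a b) := (nonempty_Icc.2 hab).to_subtype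
  ciSup_le fun t => hC t t.2

end SupNorm

section GreenFunction

variable {a b α β τ t : ℝ} {ψ F : ℝ → ℝ}

lemma rpow_sub_div_sub_mem_Icc (hβ : 0 ≤ β) (hψ : MonotoneOn ψ (Icc a b)) (ht : t ∈ Icc a b) :
    ((ψ t - ψ a) / (ψ b - ψ a)) ^ β ∈ Icc (0 : ℝ) 1 :=
  have hab : a ≤ b := ht.1.trans ht.2
  have hat : 0 ≤ ψ t - ψ a := sub_nonneg.2 (hψ (left_mem_Icc.2 hab) ht ht.1)
  have htb : ψ t - ψ a ≤ ψ b - ψ a :=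
    sub_le_sub_right (hψ ht (right_mem_Icc.2 hab) ht.2) (ψ a)
  have hratio := unitInterval.div_mem hat (hat.trans htb) htb
  ⟨Real.rpow_nonneg hratio.1 β, Real.rpow_le_one hratio.1 hratio.2 hβ⟩

lemma G_eq_mul_fractionalKernel_sub_indicator (hat : ψ a ≤ ψ t) (hab : ψ a ≤ ψ b) (τ : ℝ) :
    G a b α β ψ τ t =
      ((ψ t - ψ a) / (ψ b - ψ a)) ^ β * fractionalKernel (α + β) (ψ b - ψ τ) -
        (Iic t).indicator (fun τ => fractionalKernel (α + β) (ψ t - ψ τ)) τ := by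
  rw [Real.div_rpow (sub_nonneg.2 hat) (sub_nonneg.2 hab)]
  simp only [G, fractionalKernel, indicator_apply, mem_Iic, div_mul_div_comm,
    mul_comm ((ψ b - ψ a) ^ β)]
  split_ifs
  · rfl
  · rw [sub_zero]

lemma abs_G_le (hβ : 0 ≤ β) (hαβ : 1 ≤ α + β) (hψ : MonotoneOn ψ (Icc a b))
    (hτ : τ ∈ Icc a b) (ht : t ∈ Icc a b) :
    |G a b α β ψ τ t| ≤ fractionalKernel (α + β) (ψ b - ψ a) := by
  have hab : a ≤ b := ht.1.trans ht.2
  have hψa : ∀ s ∈ Icc a b, ψ a ≤ ψ s := fun s hs => hψ (left_mem_Icc.2 hab) hs hs.1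
  have hψb : ∀ s ∈ Icc a b, ψ s ≤ ψ b := fun s hs => hψ hs (right_mem_Icc.2 hab) hs.2
  have hweight := rpow_sub_div_sub_mem_Icc hβ hψ ht
  have hboundary : fractionalKernel (α + β) (ψ b - ψ τ) ∈
      Icc 0 (fractionalKernel (α + β) (ψ b - ψ a)) :=
    fractionalKernel_mem_Icc hαβ (sub_nonneg.2 (hψb τ hτ)) (sub_le_sub_left (hψa τ hτ) (ψ b))
  have hvolterra (hτt : τ ≤ t) : fractionalKernel (α + β) (ψ t - ψ τ) ∈
      Icc 0 (fractionalKernel (α + β) (ψ b - ψ a)) :=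
    fractionalKernel_mem_Icc hαβ (sub_nonneg.2 (hψ hτ ht hτt))
      (sub_le_sub (hψb t ht) (hψa τ hτ))
  rw [G_eq_mul_fractionalKernel_sub_indicator (hψa t ht) (hψa b (right_mem_Icc.2 hab))]
  exact abs_sub_le_of_nonneg_of_le (mul_nonneg hweight.1 hboundary.1)
    ((mul_le_of_le_one_left hboundary.1 hweight.2).trans hboundary.2)
    (indicator_apply_nonneg fun h => (hvolterra h).1)
    (indicator_apply_le' (fun h => (hvolterra h).2)
      fun _ => hboundary.1.trans hboundary.2)

lemma aestronglyMeasurable_G (hψ : MonotoneOn ψ (Icc a b)) (ht : t ∈ Icc a b) :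
    AEStronglyMeasurable (fun τ => G a b α β ψ τ t) (volume.restrict (Icc a b)) := by
  have hab : a ≤ b := ht.1.trans ht.2
  have hψm : AEMeasurable ψ (volume.restrict (Icc a b)) :=
    aemeasurable_restrict_of_monotoneOn measurableSet_Icc hψ
  have hK (c : ℝ) : AEStronglyMeasurable (fun τ => fractionalKernel (α + β) (c - ψ τ))
      (volume.restrict (Icc a b)) :=
    ((measurable_fractionalKernel _).comp_aemeasurable
      (hψm.const_sub c)).aestronglyMeasurable
  simp only [G_eq_mul_fractionalKernel_sub_indicator (hψ (left_mem_Icc.2 hab) ht ht.1)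
    (hψ (left_mem_Icc.2 hab) (right_mem_Icc.2 hab) hab)]
  exact ((hK (ψ b)).const_mul _).sub ((hK (ψ t)).indicator measurableSet_Iic)

lemma intervalIntegrable_G_mul (hβ : 0 ≤ β) (hαβ : 1 ≤ α + β)
    (hψ : MonotoneOn ψ (Icc a b)) (hF : IntervalIntegrable F volume a b) (ht : t ∈ Icc a b) :
    IntervalIntegrable (fun τ => G a b α β ψ τ t * F τ) volume a b := by
  have hab : a ≤ b := ht.1.trans ht.2
  rw [intervalIntegrable_iff_integrableOn_Icc_of_le hab] at hF ⊢
  exact hF.bdd_mul (aestronglyMeasurable_G hψ ht)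
    (ae_restrict_of_forall_mem measurableSet_Icc fun τ hτ => abs_G_le hβ hαβ hψ hτ ht)

lemma abs_integral_G_mul_le (hβ : 0 ≤ β) (hαβ : 1 ≤ α + β)
    (hψ : MonotoneOn ψ (Icc a b)) (hF : IntervalIntegrable F volume a b) (ht : t ∈ Icc a b) :
    |∫ τ in a..b, G a b α β ψ τ t * F τ| ≤
      fractionalKernel (α + β) (ψ b - ψ a) * ∫ τ in a..b, |F τ| := by
  rw [← intervalIntegral.integral_const_mul]
  refine intervalIntegral.norm_integral_le_of_norm_le (E := ℝ) (ht.1.trans ht.2)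
    (ae_of_all _ fun τ hτ => ?_) (hF.abs.const_mul _)
  rw [Real.norm_eq_abs, abs_mul]
  exact mul_le_mul_of_nonneg_right (abs_G_le hβ hαβ hψ (Ioc_subset_Icc_self hτ) ht)
    (abs_nonneg _)

lemma supNorm_Sop_le {ψd : ℝ → ℝ} {f : ℝ → ℝ → ℝ} {x : ℝ → ℝ} (𝒢 : (ℝ → ℝ) → ℝ)
    (hab : a ≤ b) (hβ : 0 ≤ β) (hαβ : 1 ≤ α + β) (hψ : MonotoneOn ψ (Icc a b))
    (hfx : IntervalIntegrable (fun τ => ψd τ * f τ (x τ)) volume a b) :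
    supNorm a b (Sop a b α β ψ ψd f 𝒢 x) ≤
      |𝒢 x| + fractionalKernel (α + β) (ψ b - ψ a) * ∫ τ in a..b, |ψd τ * f τ (x τ)| := by
  refine supNorm_le hab fun t ht => ?_
  have hweight := rpow_sub_div_sub_mem_Icc hβ hψ ht
  simp only [Sop, mul_assoc]
  refine (abs_add_le _ _).trans (add_le_add ?_ (abs_integral_G_mul_le hβ hαβ hψ hfx ht))
  rw [abs_mul, abs_of_nonneg hweight.1]
  exact mul_le_of_le_one_left (abs_nonneg _) hweight.2

end GreenFunction

section Derivative

variable {s : Set ℝ} {ψ ψd : ℝ → ℝ}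

lemma aestronglyMeasurable_of_hasDerivAt (hs : MeasurableSet s)
    (hψ : ∀ t ∈ s, HasDerivAt ψ (ψd t) t) : AEStronglyMeasurable ψd (volume.restrict s) :=
  (aestronglyMeasurable_deriv ψ _).congr
    (ae_restrict_of_forall_mem hs fun t ht => (hψ t ht).deriv)

lemma nonneg_of_hasDerivWithinAt_of_monotoneOn {d t : ℝ} (hψ : MonotoneOn ψ s)
    (hs : UniqueDiffWithinAt ℝ s t) (hd : HasDerivWithinAt ψ d s t) : 0 ≤ d :=
  hd.derivWithin hs ▸ hψ.derivWithin_nonneg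

lemma strictMonoOn_of_hasDerivAt_pos (hs : Convex ℝ s)
    (hψ : ∀ t ∈ s, HasDerivAt ψ (ψd t) t) (hψd : ∀ t ∈ s, 0 < ψd t) : StrictMonoOn ψ s :=
  strictMonoOn_of_hasDerivWithinAt_pos hs (HasDerivAt.continuousOn hψ)
    (fun t ht => (hψ t (interior_subset ht)).hasDerivWithinAt)
    fun t ht => hψd t (interior_subset ht)

end Derivative

section Domination

lemma abs_mul_le_of_growth {w k u r y : ℝ} {Ψ : ℝ → ℝ} (hw : 0 ≤ w) (hk : 0 ≤ k)
    (hΨ : MonotoneOn Ψ (Ici 0)) (hy : |y| ≤ k * Ψ |u|) (hu : |u| ≤ r) :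
    |w * y| ≤ Ψ r * (w * k) := by
  have hΨur : Ψ |u| ≤ Ψ r := hΨ (abs_nonneg u) ((abs_nonneg u).trans hu) hu
  calc |w * y| = w * |y| := by rw [abs_mul, abs_of_nonneg hw]
    _ ≤ w * (k * Ψ r) := by gcongr; exact hy.trans (by gcongr)
    _ = Ψ r * (w * k) := by ring

lemma intervalIntegrable_of_abs_le_Ioo {a b : ℝ} {F h : ℝ → ℝ} (hab : a ≤ b)
    (hF : AEStronglyMeasurable F (volume.restrict (Ioo a b)))
    (hh : IntervalIntegrable h volume a b) (hFh : ∀ t ∈ Ioo a b, |F t| ≤ h t) :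
    IntervalIntegrable F volume a b := by
  rw [intervalIntegrable_iff_integrableOn_Ioo_of_le hab] at hh ⊢
  exact hh.mono' hF (ae_restrict_of_forall_mem measurableSet_Ioo hFh)

end Domination

theorem solution_operator_maps_bounded_to_bounded_general
    (a b α β κ : ℝ) (hab : a < b) (hβ : 0 ≤ β) (hαβ : 1 ≤ α + β)
    (ψ ψd : ℝ → ℝ)
    (hψ_mono : StrictMonoOn ψ (Icc a b))
    (hψ : ∀ t ∈ Ioo a b, HasDerivAt ψ (ψd t) t)
    (f : ℝ → ℝ → ℝ) (𝒢 : (ℝ → ℝ) → ℝ) (κ₁ Ψ : ℝ → ℝ)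
    (hκ : 0 ≤ κ)
    (h𝒢_bound : ∀ x : ℝ → ℝ, ContinuousOn x (Icc a b) → |𝒢 x| ≤ κ * supNorm a b x)
    (hκ₁_nonneg : ∀ t ∈ Ioo a b, 0 ≤ κ₁ t)
    (hκ₁_int : IntervalIntegrable (fun t => ψd t * κ₁ t) volume a b)
    (hΨ_mono : MonotoneOn Ψ (Ici (0 : ℝ)))
    (hf_growth : ∀ t ∈ Ioo a b, ∀ u : ℝ, |f t u| ≤ κ₁ t * Ψ |u|)
    (r : ℝ) (x : ℝ → ℝ) (hx : ContinuousOn x (Icc a b)) (hxr : supNorm a b x ≤ r)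
    (hfx : AEStronglyMeasurable (fun t => f t (x t)) (volume.restrict (Ioo a b))) :
    (∀ t ∈ Icc a b,
      IntervalIntegrable (fun τ => G a b α β ψ τ t * ψd τ * f τ (x τ)) volume a b) ∧
    supNorm a b (Sop a b α β ψ ψd f 𝒢 x) ≤
      κ * r + Ψ r * ((ψ b - ψ a) ^ (α + β - 1) / Real.Gamma (α + β)) *
        ∫ τ in a..b, ψd τ * κ₁ τ := by
  have hmono := hψ_mono.monotoneOn
  have hψd_nonneg : ∀ τ ∈ Ioo a b, 0 ≤ ψd τ := fun τ hτ =>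
    nonneg_of_hasDerivWithinAt_of_monotoneOn (hmono.mono Ioo_subset_Icc_self)
      (isOpen_Ioo.uniqueDiffWithinAt hτ) (hψ τ hτ).hasDerivWithinAt
  have hdom : ∀ τ ∈ Ioo a b, |ψd τ * f τ (x τ)| ≤ Ψ r * (ψd τ * κ₁ τ) := fun τ hτ =>
    abs_mul_le_of_growth (hψd_nonneg τ hτ) (hκ₁_nonneg τ hτ) hΨ_mono (hf_growth τ hτ (x τ))
      ((abs_le_supNorm hx (Ioo_subset_Icc_self hτ)).trans hxr)
  have hdom_int : IntervalIntegrable (fun τ => Ψ r * (ψd τ * κ₁ τ)) volume a b :=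
    hκ₁_int.const_mul (Ψ r)
  have hF : IntervalIntegrable (fun τ => ψd τ * f τ (x τ)) volume a b :=
    intervalIntegrable_of_abs_le_Ioo hab.le
      ((aestronglyMeasurable_of_hasDerivAt measurableSet_Ioo hψ).mul hfx) hdom_int hdom
  have hF_le : ∫ τ in a..b, |ψd τ * f τ (x τ)| ≤ Ψ r * ∫ τ in a..b, ψd τ * κ₁ τ := by
    rw [← intervalIntegral.integral_const_mul]
    exact intervalIntegral.integral_mono_on_of_le_Ioo hab.le hF.abs hdom_int hdom
  have h𝒢x : |𝒢 x| ≤ κ * r := (h𝒢_bound x hx).trans (mul_le_mul_of_nonneg_left hxr hκ)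
  have hK : 0 ≤ fractionalKernel (α + β) (ψ b - ψ a) :=
    (abs_nonneg _).trans
      (abs_G_le hβ hαβ hmono (left_mem_Icc.2 hab.le) (left_mem_Icc.2 hab.le))
  refine ⟨fun t ht => ?_, ?_⟩
  · simpa only [mul_assoc] using intervalIntegrable_G_mul hβ hαβ hmono hF ht
  · calc supNorm a b (Sop a b α β ψ ψd f 𝒢 x)
        ≤ |𝒢 x| + fractionalKernel (α + β) (ψ b - ψ a) * ∫ τ in a..b, |ψd τ * f τ (x τ)| :=
          supNorm_Sop_le 𝒢 hab.le hβ hαβ hmono hF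
      _ ≤ κ * r + fractionalKernel (α + β) (ψ b - ψ a) *
            (Ψ r * ∫ τ in a..b, ψd τ * κ₁ τ) := by gcongr
      _ = _ := by rw [fractionalKernel]; ring

theorem solution_operator_maps_bounded_to_bounded
    (a b α β κ : ℝ) (hab : a < b)
    (hα0 : 0 < α) (hα1 : α ≤ 1) (hβ0 : 0 < β) (hβ1 : β ≤ 1) (hαβ : 1 < α + β)
    (ψ ψd : ℝ → ℝ)
    (hψ : ∀ t ∈ Set.Icc a b, HasDerivAt ψ (ψd t) t)
    (hψd_cont : ContinuousOn ψd (Set.Icc a b))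
    (hψd_pos : ∀ t ∈ Set.Icc a b, 0 < ψd t)
    (f : ℝ → ℝ → ℝ) (𝒢 : (ℝ → ℝ) → ℝ) (κ₁ Ψ : ℝ → ℝ)
    (hκ0 : 0 < κ) (hκ1 : κ < 1)
    (h𝒢_bound : ∀ x : ℝ → ℝ, ContinuousOn x (Set.Icc a b) →
      |𝒢 x| ≤ κ * supNorm a b x)
    (hf_meas : ∀ u : ℝ,
      AEStronglyMeasurable (fun t => f t u) (volume.restrict (Set.Ioo a b)))
    (hκ₁_meas : AEStronglyMeasurable κ₁ (volume.restrict (Set.Ioo a b)))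
    (hκ₁_nonneg : ∀ t ∈ Set.Ioo a b, 0 ≤ κ₁ t)
    (hκ₁_int : IntervalIntegrable (fun t => ψd t * κ₁ t) volume a b)
    (hΨ_nonneg : ∀ s ∈ Set.Ici (0 : ℝ), 0 ≤ Ψ s)
    (hΨ_mono : MonotoneOn Ψ (Set.Ici (0 : ℝ)))
    (hf_growth : ∀ t ∈ Set.Ioo a b, ∀ u : ℝ, |f t u| ≤ κ₁ t * Ψ |u|) :
    ∀ r > (0 : ℝ), ∀ x : ℝ → ℝ, ContinuousOn x (Set.Icc a b) →
      supNorm a b x ≤ r →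
      AEStronglyMeasurable (fun t => f t (x t)) (volume.restrict (Set.Ioo a b)) →
      (∀ t ∈ Set.Icc a b,
        IntervalIntegrable (fun τ => G a b α β ψ τ t * ψd τ * f τ (x τ)) volume a b) ∧
      supNorm a b (Sop a b α β ψ ψd f 𝒢 x) ≤
        κ * r + Ψ r * ((ψ b - ψ a) ^ (α + β - 1) / Real.Gamma (α + β)) *
          ∫ τ in a..b, ψd τ * κ₁ τ :=
  fun r _ => solution_operator_maps_bounded_to_bounded_general a b α β κ hab hβ0.le hαβ.le ψ ψd
    (strictMonoOn_of_hasDerivAt_pos (convex_Icc a b) hψ hψd_pos)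
    (fun t ht => hψ t (Ioo_subset_Icc_self ht))
    f 𝒢 κ₁ Ψ hκ0.le h𝒢_bound hκ₁_nonneg hκ₁_int hΨ_mono hf_growth r
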